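/- Let H be a real Hilbert space, C ⊆ H nonempty closed convex, and suppose {f_i}_{i=1}^N, {A_i}_{i=1}^N, {S_j}_{j=1}^M, F, ω, and the parameter sequences {α_n}, {β_n}, {r_n} satisfy the stated hypotheses. Let x_0 ∈ C, C_0 = C, and suppose the sequences {x_n}, {y_n^i}, {z_n^j}, {C_n} satisfy for every n ≥ 0: (i) for each i, y_n^i ∈ C and f_i(y_n^i, y) + ⟨A_i x_n, y − y_n^i⟩ + (1/r_n)⟨y − y_n^i, y_n^i − x_n⟩ ≥ 0 for all y ∈ C; (ii) i_n maximizes ‖y_n^i − x_n‖ over i = 1,…,N and ȳ_n = y_n^{i_n}; (iii) z_n^j = α_n x_n + (1−α_n)(β_n ȳ_n + (1−β_n) S_j^n ȳ_n) for j = 1,…,M; (iv) j_n maximizes ‖z_n^j − x_n‖ over j = 1,…,M and z̄_n = z_n^{j_n}; (v) C_{n+1} = {v ∈ C_n : ‖z̄_n − v‖² ≤ ‖x_n − v‖² + ε_n} with ε_n = (k_n − 1)(‖x_n‖ + ω)²; (vi) x_{n+1} = P_{C_{n+1}} x_0. Then the sequences {x_n}, {y_n^i} (each i), and {z_n^j}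 (each j) all converge strongly to P_F x_0. -/

import Mathlib

open scoped RealInnerProductSpace
open Filter Topology

/-- `p` is the metric projection of `x` onto `K`. -/
def IsProjOn {H : Type*} [NormedAddCommGroup H] (K : Set H) (x p : H) : Prop :=
  p ∈ K ∧ ∀ v ∈ K, ‖p - x‖ ≤ ‖v - x‖

/-!
Put `c = 1 - e / (2 α) > 0`. For `u ∈ F`, monotonicity of `f_i` and inverse strong monotonicity
of `A_i` give `‖y_n^i - u‖² ≤ ‖x_n - u‖² - c ‖x_n - y_n^i‖²`, and relaxing the pseudocontraction
`S_j^n` by `β_n ≥ κ` costs only the factor `k_n`; hence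
`‖z_n^j - u‖² ≤ k_n ‖x_n - u‖² - (1 - α_n) c ‖x_n - ȳ_n‖²`.
In particular `F ⊆ C_n` for every `n`. The `C_n` decrease and are convex, being `C` cut by
half-spaces, so the projections `x_n` of `x_0` onto them satisfy
`‖x_n - x_m‖² ≤ ‖x_m - x_0‖² - ‖x_n - x_0‖²` for `n ≤ m`. Since `‖x_n - x_0‖²` is increasing and
bounded, `x_n` is Cauchy and converges to some `p ∈ C`. As `x_{n+1} ∈ C_{n+1}`, also `z̄_n → p`,
and then the displayed estimate for `z̄_n` forces `ȳ_n → p`; the maximality of `i_n` and `j_n`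
spreads this to all `y_n^i` and `z_n^j`. Passing to the limit in the equilibrium inequalities and
in `S_j^n ȳ_n` gives `p ∈ F`, and `p` is nearest to `x_0` there because `F ⊆ C_n`.
-/

section Sequences

theorem cauchySeq_of_dist_sq_le_sub {X β : Type*} [PseudoMetricSpace X] [Nonempty β]
    [SemilatticeSup β] {u : β → X} {φ : β → ℝ} (hφ : BddAbove (Set.range φ))
    (h : ∀ n m, n ≤ m → dist (u n) (u m) ^ 2 ≤ φ m - φ n) : CauchySeq u := by
  have hmono : Monotone φ := fun n m hnm ↦ sub_nonneg.1 ((sq_nonneg _).trans (h n m hnm))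
  refine cauchySeq_of_le_tendsto_0' (fun n ↦ √((⨆ m, φ m) - φ n)) (fun n m hnm ↦ ?_) ?_
  · exact Real.le_sqrt_of_sq_le ((h n m hnm).trans (by gcongr; exact le_ciSup hφ m))
  · simpa using ((tendsto_atTop_ciSup hmono hφ).const_sub (⨆ m, φ m)).sqrt

variable {ι E : Type*} [NormedAddCommGroup E] {l : Filter ι} {x y z : ι → E} {p : E}

theorem tendsto_of_norm_sub_le_norm_sub (hx : Tendsto x l (𝓝 p)) (hz : Tendsto z l (𝓝 p))
    (h : ∀ n, ‖y n - x n‖ ≤ ‖z n - x n‖) : Tendsto y l (𝓝 p) := by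
  have hzx : Tendsto (fun n ↦ ‖z n - x n‖) l (𝓝 0) := by simpa using (hz.sub hx).norm
  simpa using (squeeze_zero_norm h hzx).add hx

theorem tendsto_of_norm_sq_add_le {k : ι → ℝ} {c : ℝ} {u : E} (hc : 0 < c)
    (hx : Tendsto x l (𝓝 p)) (hz : Tendsto z l (𝓝 p)) (hk : Tendsto k l (𝓝 1))
    (h : ∀ᶠ n in l, ‖z n - u‖ ^ 2 + c * ‖x n - y n‖ ^ 2 ≤ k n * ‖x n - u‖ ^ 2) :
    Tendsto y l (𝓝 p) := by
  have hgap : Tendsto (fun n ↦ (k n * ‖x n - u‖ ^ 2 - ‖z n - u‖ ^ 2) / c) l (𝓝 0) := by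
    simpa using ((hk.mul ((hx.sub_const u).norm.pow 2)).sub
      ((hz.sub_const u).norm.pow 2)).div_const c
  have hsq : Tendsto (fun n ↦ ‖x n - y n‖ ^ 2) l (𝓝 0) := by
    refine squeeze_zero' (.of_forall fun n ↦ sq_nonneg _) (h.mono fun n hn ↦ ?_) hgap
    rw [le_div_iff₀ hc]
    linarith
  have hxy : Tendsto (fun n ↦ x n - y n) l (𝓝 0) :=
    tendsto_zero_iff_norm_tendsto_zero.2 (by simpa using hsq.sqrt)
  simpa using hx.sub hxy

theorem tendsto_of_tendsto_smul_add_smul [NormedSpace ℝ E] {t : ι → ℝ} {q : ℝ} (hq : q < 1)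
    (ht : ∀ᶠ n in l, t n ≤ q) (hx : Tendsto x l (𝓝 p))
    (hxy : Tendsto (fun n ↦ t n • x n + (1 - t n) • y n) l (𝓝 p)) : Tendsto y l (𝓝 p) := by
  have hdiff : Tendsto (fun n ↦ ‖t n • x n + (1 - t n) • y n - x n‖ / (1 - q)) l (𝓝 0) := by
    simpa using (hxy.sub hx).norm.div_const (1 - q)
  have hyx : Tendsto (fun n ↦ y n - x n) l (𝓝 0) := by
    refine squeeze_zero_norm' (ht.mono fun n hn ↦ ?_) hdiff
    have hcomb : t n • x n + (1 - t n) • y n - x n = (1 - t n) • (y n - x n) := by module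
    rw [le_div_iff₀ (by linarith), hcomb, norm_smul, Real.norm_of_nonneg (by linarith), mul_comm]
    gcongr
  simpa using hyx.add hx

end Sequences

theorem tendsto_segment_nhdsWithin {E : Type*} [AddCommGroup E] [Module ℝ E]
    [TopologicalSpace E] [ContinuousAdd E] [ContinuousSMul ℝ E] {C : Set E} (hC : Convex ℝ C)
    {p w : E} (hp : p ∈ C) (hw : w ∈ C) :
    Tendsto (fun t : ℝ ↦ t • w + (1 - t) • p) (𝓝[>] 0) (𝓝[C] p) := by
  refine tendsto_nhdsWithin_iff.2 ⟨?_, ?_⟩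
  · have hcont : Continuous fun t : ℝ ↦ t • w + (1 - t) • p := by fun_prop
    simpa using (hcont.tendsto 0).mono_left nhdsWithin_le_nhds
  · filter_upwards [Ioo_mem_nhdsGT one_pos] with t ht
    exact hC hw hp ht.1.le (sub_nonneg.2 ht.2.le) (add_sub_cancel _ _)

section Projection

theorem IsProjOn.of_tendsto {ι E : Type*} [NormedAddCommGroup E] {l : Filter ι} [l.NeBot]
    {F : Set E} {K : ι → Set E} {x : ι → E} {a p : E} (hx : Tendsto x l (𝓝 p)) (hp : p ∈ F)
    (hFK : ∀ n, F ⊆ K n) (h : ∀ n, IsProjOn (K n) a (x n)) : IsProjOn F a p :=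
  ⟨hp, fun v hv ↦ le_of_tendsto (hx.sub_const a).norm (.of_forall fun n ↦ (h n).2 v (hFK n hv))⟩

variable {H : Type*} [NormedAddCommGroup H] [InnerProductSpace ℝ H] {K : Set H} {a p v : H}

theorem IsProjOn.real_inner_le_zero (hK : Convex ℝ K) (h : IsProjOn K a p) (hv : v ∈ K) :
    ⟪a - p, v - p⟫ ≤ 0 := by
  have : Nonempty K := ⟨⟨p, h.1⟩⟩
  refine (norm_eq_iInf_iff_real_inner_le_zero hK h.1).1 (le_antisymm ?_ ?_) v hv
  · exact le_ciInf fun w ↦ by simpa only [norm_sub_rev a] using h.2 w w.2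
  · exact ciInf_le ⟨0, Set.forall_mem_range.2 fun w : K ↦ norm_nonneg (a - w)⟩ ⟨p, h.1⟩

theorem IsProjOn.norm_sub_sq_add_norm_sub_sq_le (hK : Convex ℝ K) (h : IsProjOn K a p)
    (hv : v ∈ K) : ‖v - p‖ ^ 2 + ‖p - a‖ ^ 2 ≤ ‖v - a‖ ^ 2 := by
  have hobtuse := h.real_inner_le_zero hK hv
  have hexpand : ‖v - a‖ ^ 2 = ‖v - p‖ ^ 2 - 2 * ⟪a - p, v - p⟫ + ‖p - a‖ ^ 2 := by
    rw [← sub_sub_sub_cancel_right v a p, norm_sub_sq_real, real_inner_comm, norm_sub_rev a p]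
  linarith

theorem cauchySeq_of_isProjOn_antitone {K : ℕ → Set H} {x : ℕ → H} {u : H} (hanti : Antitone K)
    (hconv : ∀ n, Convex ℝ (K n)) (hproj : ∀ n, IsProjOn (K n) a (x n)) (hu : ∀ n, u ∈ K n) :
    CauchySeq x := by
  refine cauchySeq_of_dist_sq_le_sub (φ := fun n ↦ ‖x n - a‖ ^ 2) ?_ fun n m hnm ↦ ?_
  · refine ⟨‖u - a‖ ^ 2, Set.forall_mem_range.2 fun n ↦ ?_⟩
    exact pow_le_pow_left₀ (norm_nonneg _) ((hproj n).2 u (hu n)) 2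
  · rw [dist_comm, dist_eq_norm]
    exact le_sub_iff_add_le.2
      ((hproj n).norm_sub_sq_add_norm_sub_sq_le (hconv n) (hanti hnm (hproj m).1))

end Projection

section ShrinkingProjection

theorem convex_setOf_norm_sub_sq_le {H : Type*} [NormedAddCommGroup H] [InnerProductSpace ℝ H]
    (x z : H) (ε : ℝ) :
    Convex ℝ {v | ‖z - v‖ ^ 2 ≤ ‖x - v‖ ^ 2 + ε} := by
  have hset : {v | ‖z - v‖ ^ 2 ≤ ‖x - v‖ ^ 2 + ε} =
      {v | innerₛₗ ℝ (x - z) v ≤ (‖x‖ ^ 2 - ‖z‖ ^ 2 + ε) / 2} := by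
    ext v
    simp only [Set.mem_ofPred_eq, norm_sub_sq_real, innerₛₗ_apply_apply, inner_sub_left]
    constructor <;> intro hv <;> linarith
  rw [hset]
  exact convex_halfSpace_le (innerₛₗ ℝ (x - z)).isLinear _

variable {H : Type*} [NormedAddCommGroup H]

/-- The shrinking projection scheme started at `x 0 ∈ C`: each `K (n + 1)` cuts `K n` by the
condition `‖z n - v‖² ≤ ‖x n - v‖² + ε n`, and `x (n + 1)` is the projection of `x 0` onto it. The
paper's `C_n` is `K n`. -/
structure IsShrinkingProjection (C : Set H) (x z : ℕ → H) (ε : ℕ → ℝ) (K : ℕ → Set H) : Prop where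
  start_mem : x 0 ∈ C
  zero : K 0 = C
  succ : ∀ n, K (n + 1) = {v ∈ K n | ‖z n - v‖ ^ 2 ≤ ‖x n - v‖ ^ 2 + ε n}
  isProjOn_succ : ∀ n, IsProjOn (K (n + 1)) (x 0) (x (n + 1))

namespace IsShrinkingProjection

variable {C F : Set H} {x z : ℕ → H} {ε : ℕ → ℝ} {K : ℕ → Set H} {p : H}

theorem antitone (h : IsShrinkingProjection C x z ε K) : Antitone K :=
  antitone_nat_of_succ_le fun n ↦ (h.succ n).trans_subset (Set.sep_subset _ _)

theorem convex [InnerProductSpace ℝ H] (h : IsShrinkingProjection C x z ε K) (hC : Convex ℝ C)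
    (n : ℕ) : Convex ℝ (K n) := by
  induction n with
  | zero => rwa [h.zero]
  | succ n ih => rw [h.succ]; exact ih.inter (convex_setOf_norm_sub_sq_le _ _ _)

theorem isProjOn (h : IsShrinkingProjection C x z ε K) : ∀ n, IsProjOn (K n) (x 0) (x n)
  | 0 => ⟨h.zero ▸ h.start_mem, fun v _ ↦ by simp⟩
  | n + 1 => h.isProjOn_succ n

theorem mem (h : IsShrinkingProjection C x z ε K) (n : ℕ) : x n ∈ C :=
  h.zero ▸ h.antitone (Nat.zero_le n) (h.isProjOn n).1

theorem subset (h : IsShrinkingProjection C x z ε K) (hFC : F ⊆ C)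
    (hF : ∀ n, ∀ u ∈ F, ‖z n - u‖ ^ 2 ≤ ‖x n - u‖ ^ 2 + ε n) (n : ℕ) : F ⊆ K n := by
  induction n with
  | zero => rwa [h.zero]
  | succ n ih => rw [h.succ]; exact fun u hu ↦ ⟨ih hu, hF n u hu⟩

theorem exists_tendsto [InnerProductSpace ℝ H] (h : IsShrinkingProjection C x z ε K)
    (hC : IsComplete C) (hconv : Convex ℝ C) {u : H} (hu : ∀ n, u ∈ K n) :
    ∃ p ∈ C, Tendsto x atTop (𝓝 p) :=
  cauchySeq_tendsto_of_isComplete hC h.mem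
    (cauchySeq_of_isProjOn_antitone h.antitone (h.convex hconv) h.isProjOn hu)

theorem tendsto_anchor (h : IsShrinkingProjection C x z ε K) (hε : Tendsto ε atTop (𝓝 0))
    (hx : Tendsto x atTop (𝓝 p)) : Tendsto z atTop (𝓝 p) := by
  have hx' : Tendsto (fun n ↦ x (n + 1)) atTop (𝓝 p) := hx.comp (tendsto_add_atTop_nat 1)
  have hbound : Tendsto (fun n ↦ ‖x n - x (n + 1)‖ ^ 2 + ε n) atTop (𝓝 0) := by
    simpa using ((hx.sub hx').norm.pow 2).add hε
  have hsq : Tendsto (fun n ↦ ‖z n - x (n + 1)‖ ^ 2) atTop (𝓝 0) :=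
    squeeze_zero (fun n ↦ sq_nonneg _)
      (fun n ↦ ((h.succ n).subset (h.isProjOn_succ n).1).2) hbound
  have hzx : Tendsto (fun n ↦ z n - x (n + 1)) atTop (𝓝 0) :=
    tendsto_zero_iff_norm_tendsto_zero.2 (by simpa using hsq.sqrt)
  simpa using hzx.add hx'

end IsShrinkingProjection

end ShrinkingProjection

section EquilibriumProblem

variable {H : Type*} [NormedAddCommGroup H] [InnerProductSpace ℝ H] {C : Set H}
  {f : H → H → ℝ} {A : H → H}

/-- Conditions (A1)–(A4) on a bifunction `f` on `C`. -/
structure IsEquilibriumBifunction (C : Set H) (f : H → H → ℝ) : Prop where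
  self_eq_zero : ∀ x ∈ C, f x x = 0
  add_swap_nonpos : ∀ x ∈ C, ∀ y ∈ C, f x y + f y x ≤ 0
  limsup_segment_le : ∀ x ∈ C, ∀ y ∈ C, ∀ z ∈ C,
    limsup (fun t : ℝ ↦ f (t • z + (1 - t) • x) y) (𝓝[>] 0) ≤ f x y
  convexOn : ∀ x ∈ C, ConvexOn ℝ C (f x)
  lowerSemicontinuousOn : ∀ x ∈ C, LowerSemicontinuousOn (f x) C

/-- The equilibrium inequality for `f` perturbed by the constant vector `B`. A point `p ∈ C` lies in
`GEP(f, A)` when this holds with `B = A p`, and the regularized problem that defines `y_n^i` is the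
case `p = y_n^i`, `B = A_i x_n + (1 / r_n) • (y_n^i - x_n)`. Membership `p ∈ C` is kept separate. -/
def IsEquilibriumPoint (C : Set H) (f : H → H → ℝ) (B p : H) : Prop :=
  ∀ w ∈ C, 0 ≤ f p w + ⟪B, w - p⟫

/-- `A` is `α`-inverse strongly monotone on `C`. -/
def IsInverseStronglyMonotoneOn (α : ℝ) (A : H → H) (C : Set H) : Prop :=
  ∀ x ∈ C, ∀ y ∈ C, α * ‖A x - A y‖ ^ 2 ≤ ⟪A x - A y, x - y⟫

theorem isEquilibriumPoint_add_smul_iff {B g p : H} {c : ℝ} :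
    IsEquilibriumPoint C f (B + c • g) p ↔
      ∀ w ∈ C, 0 ≤ f p w + ⟪B, w - p⟫ + c * ⟪w - p, g⟫ := by
  simp only [IsEquilibriumPoint, inner_add_left, real_inner_smul_left, real_inner_comm, add_assoc]

theorem IsInverseStronglyMonotoneOn.norm_sub_le {α : ℝ} (hα : 0 < α)
    (hA : IsInverseStronglyMonotoneOn α A C) {x y : H} (hx : x ∈ C) (hy : y ∈ C) :
    ‖A x - A y‖ ≤ α⁻¹ * ‖x - y‖ := by
  rw [inv_mul_eq_div, le_div_iff₀ hα]
  have hsq : ‖A x - A y‖ * α * ‖A x - A y‖ ≤ ‖x - y‖ * ‖A x - A y‖ := by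
    linarith [hA x hx y hy, real_inner_le_norm (A x - A y) (x - y)]
  rcases (norm_nonneg (A x - A y)).eq_or_lt with h0 | hpos
  · simp [← h0]
  · exact le_of_mul_le_mul_right hsq hpos

theorem IsInverseStronglyMonotoneOn.continuousOn {α : ℝ} (hα : 0 < α)
    (hA : IsInverseStronglyMonotoneOn α A C) : ContinuousOn A C := by
  refine (LipschitzOnWith.of_dist_le_mul (K := ⟨α⁻¹, by positivity⟩)
    fun x hx y hy ↦ ?_).continuousOn
  rw [dist_eq_norm, dist_eq_norm]
  exact hA.norm_sub_le hα hx hy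

theorem IsInverseStronglyMonotoneOn.neg_le_inner {α : ℝ} (hα : 0 < α)
    (hA : IsInverseStronglyMonotoneOn α A C) {x u : H} (hx : x ∈ C) (hu : u ∈ C) (y : H) :
    -(‖x - y‖ ^ 2 / (4 * α)) ≤ ⟪A x - A u, y - u⟫ := by
  have hsplit : ⟪A x - A u, y - u⟫ = ⟪A x - A u, x - u⟫ - ⟪A x - A u, x - y⟫ := by
    rw [← inner_sub_right, sub_sub_sub_cancel_left]
  have hcomplete : α * ‖A x - A u‖ ^ 2 - ‖A x - A u‖ * ‖x - y‖ + ‖x - y‖ ^ 2 / (4 * α) =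
      α * (‖A x - A u‖ - ‖x - y‖ / (2 * α)) ^ 2 := by
    field_simp
    ring
  have hsq : 0 ≤ α * (‖A x - A u‖ - ‖x - y‖ / (2 * α)) ^ 2 := by positivity
  linarith [hA x hx u hu, real_inner_le_norm (A x - A u) (x - y)]

theorem IsEquilibriumPoint.inner_sub_nonpos {B B' y u : H} (hf : f y u + f u y ≤ 0) (hyC : y ∈ C)
    (huC : u ∈ C) (hy : IsEquilibriumPoint C f B y) (hu : IsEquilibriumPoint C f B' u) :
    ⟪B - B', y - u⟫ ≤ 0 := by
  have hyu := hy u huC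
  rw [← neg_sub y u, inner_neg_right] at hyu
  rw [inner_sub_left]
  linarith [hu y hyC]

theorem IsEquilibriumPoint.norm_resolvent_sub_sq_le {α r : ℝ} {x y u : H} (hα : 0 < α) (hr : 0 < r)
    (hf : f y u + f u y ≤ 0) (hA : IsInverseStronglyMonotoneOn α A C) (hxC : x ∈ C) (hyC : y ∈ C)
    (huC : u ∈ C) (hy : IsEquilibriumPoint C f (A x + (1 / r) • (y - x)) y)
    (hu : IsEquilibriumPoint C f (A u) u) :
    ‖y - u‖ ^ 2 ≤ ‖x - u‖ ^ 2 - (1 - r / (2 * α)) * ‖x - y‖ ^ 2 := by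
  have hexpand : ‖x - u‖ ^ 2 = ‖x - y‖ ^ 2 + 2 * ⟪x - y, y - u⟫ + ‖y - u‖ ^ 2 := by
    rw [← sub_add_sub_cancel x y u, norm_add_sq_real]
  have hmono : r * ⟪A x - A u, y - u⟫ ≤ ⟪x - y, y - u⟫ := by
    have h := hy.inner_sub_nonpos hf hyC huC hu
    rw [add_sub_right_comm, inner_add_left, real_inner_smul_left, ← neg_sub x y,
      inner_neg_left] at h
    have hdiv : ⟪A x - A u, y - u⟫ ≤ ⟪x - y, y - u⟫ / r := by
      rw [div_eq_mul_one_div]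
      linarith
    rwa [le_div_iff₀' hr] at hdiv
  have hlower := mul_le_mul_of_nonneg_left (hA.neg_le_inner hα hxC huC y) hr.le
  have hcoeff : r * -(‖x - y‖ ^ 2 / (4 * α)) = -(r / (2 * α) * ‖x - y‖ ^ 2) / 2 := by
    field_simp
    ring
  linarith

namespace IsEquilibriumBifunction

theorem neg_mul_inner_le_of_dual (hf : IsEquilibriumBifunction C f) (hC : Convex ℝ C) {B p w : H}
    (hp : p ∈ C) (hw : w ∈ C) (hdual : ∀ v ∈ C, f v p ≤ ⟪B, v - p⟫) {t : ℝ}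
    (ht : t ∈ Set.Ioo (0 : ℝ) 1) :
    -((1 - t) * ⟪B, w - p⟫) ≤ f (t • w + (1 - t) • p) w := by
  set v := t • w + (1 - t) • p with hv
  have ht' : 0 ≤ 1 - t := sub_nonneg.2 ht.2.le
  have hvC : v ∈ C := hC hw hp ht.1.le ht' (add_sub_cancel _ _)
  have hconv : 0 ≤ t * f v w + (1 - t) * f v p := by
    simpa only [smul_eq_mul, ← hv, hf.self_eq_zero v hvC] using
      (hf.convexOn v hvC).2 hw hp ht.1.le ht' (add_sub_cancel _ _)
  have hvp : f v p ≤ t * ⟪B, w - p⟫ := by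
    have hdir : v - p = t • (w - p) := by rw [hv]; module
    simpa only [hdir, real_inner_smul_right] using hdual v hvC
  have hprod : 0 ≤ t * (f v w + (1 - t) * ⟪B, w - p⟫) := by
    linarith [mul_le_mul_of_nonneg_left hvp ht']
  linarith [nonneg_of_mul_nonneg_right hprod ht.1]

/-- Minty's argument: the dual inequality is tested at the points `t w + (1 - t) p` and `t` is sent
to `0`. -/
theorem isEquilibriumPoint_of_dual (hf : IsEquilibriumBifunction C f) (hC : Convex ℝ C) {B p : H}
    (hp : p ∈ C) (hdual : ∀ v ∈ C, f v p ≤ ⟪B, v - p⟫) : IsEquilibriumPoint C f B p := by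
  intro w hw
  have hseg := tendsto_segment_nhdsWithin hC hp hw
  have hlower : ∀ᶠ t : ℝ in 𝓝[>] 0, -((1 - t) * ⟪B, w - p⟫) ≤ f (t • w + (1 - t) • p) w := by
    filter_upwards [Ioo_mem_nhdsGT one_pos] with t ht
    exact hf.neg_mul_inner_le_of_dual hC hp hw hdual ht
  -- Without an upper bound the real `limsup` in (A3) would be a junk value.
  have hupper : ∀ᶠ t : ℝ in 𝓝[>] 0, f (t • w + (1 - t) • p) w ≤ -(f w p - 1) := by
    filter_upwards [hseg.eventually (hf.lowerSemicontinuousOn w hw p hp _ (sub_one_lt _)),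
      hseg.eventually self_mem_nhdsWithin] with t hlsc htC
    linarith [hf.add_swap_nonpos _ htC w hw]
  have hlim : Tendsto (fun t : ℝ ↦ -((1 - t) * ⟪B, w - p⟫)) (𝓝[>] 0) (𝓝 (-⟪B, w - p⟫)) := by
    have hcont : Continuous fun t : ℝ ↦ -((1 - t) * ⟪B, w - p⟫) := by fun_prop
    simpa using (hcont.tendsto 0).mono_left nhdsWithin_le_nhds
  have hlimsup : -⟪B, w - p⟫ ≤ limsup (fun t : ℝ ↦ f (t • w + (1 - t) • p) w) (𝓝[>] 0) := by
    rw [← hlim.limsup_eq]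
    exact limsup_le_limsup hlower hlim.isCoboundedUnder_le ⟨_, eventually_map.2 hupper⟩
  linarith [hf.limsup_segment_le p hp w hw w hw]

theorem isEquilibriumPoint_of_tendsto (hf : IsEquilibriumBifunction C f) (hC : Convex ℝ C)
    {ι : Type*} {l : Filter ι} [l.NeBot] {B y : ι → H} {B' p : H} (hp : p ∈ C)
    (hyC : ∀ n, y n ∈ C) (hB : Tendsto B l (𝓝 B')) (hy : Tendsto y l (𝓝 p))
    (h : ∀ n, IsEquilibriumPoint C f (B n) (y n)) : IsEquilibriumPoint C f B' p := by
  refine hf.isEquilibriumPoint_of_dual hC hp fun w hw ↦ ?_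
  have hyC' : Tendsto y l (𝓝[C] p) := tendsto_nhdsWithin_iff.2 ⟨hy, .of_forall hyC⟩
  refine le_of_forall_lt_imp_le_of_dense fun q hq ↦ ge_of_tendsto (hB.inner (hy.const_sub w)) ?_
  filter_upwards [hyC'.eventually (hf.lowerSemicontinuousOn w hw p hp q hq)] with n hn
  linarith [h n w hw, hf.add_swap_nonpos _ (hyC n) w hw]

theorem isEquilibriumPoint_of_tendsto_resolvent (hf : IsEquilibriumBifunction C f)
    (hC : Convex ℝ C) (hA : ContinuousOn A C) {ι : Type*} {l : Filter ι} [l.NeBot] {x y : ι → H}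
    {r : ι → ℝ} {d : ℝ} {p : H} (hd : 0 < d) (hr : ∀ n, d ≤ r n) (hp : p ∈ C)
    (hxC : ∀ n, x n ∈ C) (hyC : ∀ n, y n ∈ C) (hx : Tendsto x l (𝓝 p)) (hy : Tendsto y l (𝓝 p))
    (h : ∀ n, IsEquilibriumPoint C f (A (x n) + (1 / r n) • (y n - x n)) (y n)) :
    IsEquilibriumPoint C f (A p) p := by
  have hAx : Tendsto (fun n ↦ A (x n)) l (𝓝 (A p)) :=
    (hA p hp).tendsto.comp (tendsto_nhdsWithin_iff.2 ⟨hx, .of_forall hxC⟩)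
  have hyx : Tendsto (fun n ↦ 1 / d * ‖y n - x n‖) l (𝓝 0) := by
    simpa using (hy.sub hx).norm.const_mul (1 / d)
  have hreg : Tendsto (fun n ↦ (1 / r n) • (y n - x n)) l (𝓝 0) := by
    refine squeeze_zero_norm (fun n ↦ ?_) hyx
    rw [norm_smul, Real.norm_of_nonneg (one_div_nonneg.2 (hd.le.trans (hr n)))]
    gcongr
    exact hr n
  exact hf.isEquilibriumPoint_of_tendsto hC hp hyC (by simpa using hAx.add hreg) hy h

end IsEquilibriumBifunction

end EquilibriumProblem

section ConvexCombination

variable {H : Type*} [NormedAddCommGroup H] [InnerProductSpace ℝ H]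

theorem norm_smul_add_smul_sub_sq (t : ℝ) (x y u : H) :
    ‖t • x + (1 - t) • y - u‖ ^ 2 =
      t * ‖x - u‖ ^ 2 + (1 - t) * ‖y - u‖ ^ 2 - t * (1 - t) * ‖x - y‖ ^ 2 := by
  have hcomb : t • x + (1 - t) • y - u = t • (x - u) + (1 - t) • (y - u) := by module
  rw [hcomb, ← sub_sub_sub_cancel_right x y u, norm_add_sq_real, norm_sub_sq_real (x - u),
    norm_smul, norm_smul, real_inner_smul_left, real_inner_smul_right, mul_pow, mul_pow,
    Real.norm_eq_abs, Real.norm_eq_abs, sq_abs, sq_abs]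
  ring

theorem norm_smul_add_smul_sub_sq_le_of_decrease {K t δ : ℝ} {x y v u : H} (ht0 : 0 ≤ t)
    (ht1 : t ≤ 1) (hK : 1 ≤ K) (hδ : 0 ≤ δ) (hy : ‖y - u‖ ^ 2 ≤ ‖x - u‖ ^ 2 - δ)
    (hv : ‖v - u‖ ^ 2 ≤ K * ‖y - u‖ ^ 2) :
    ‖t • x + (1 - t) • v - u‖ ^ 2 ≤ K * ‖x - u‖ ^ 2 - (1 - t) * δ := by
  have : 0 ≤ 1 - t := sub_nonneg.2 ht1
  calc ‖t • x + (1 - t) • v - u‖ ^ 2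
      ≤ t * ‖x - u‖ ^ 2 + (1 - t) * ‖v - u‖ ^ 2 := by
        rw [norm_smul_add_smul_sub_sq, sub_le_self_iff]
        positivity
    _ ≤ t * (K * ‖x - u‖ ^ 2) + (1 - t) * (K * (‖x - u‖ ^ 2 - δ)) := by
        gcongr
        · exact le_mul_of_one_le_left (sq_nonneg _) hK
        · exact hv.trans (by gcongr)
    _ = K * ‖x - u‖ ^ 2 - (1 - t) * (K * δ) := by ring
    _ ≤ K * ‖x - u‖ ^ 2 - (1 - t) * δ := by
        gcongr
        exact le_mul_of_one_le_left hδ hK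

end ConvexCombination

section Pseudocontraction

variable {H : Type*} [NormedAddCommGroup H] {C : Set H} {T S : H → H}
  {κ K : ℝ} {k : ℕ → ℝ}

/-- `T` is `κ`-strictly pseudocontractive on `C` up to the factor `K`; the usual notion is
`K = 1`. -/
def IsStrictPseudocontractionOn (K κ : ℝ) (T : H → H) (C : Set H) : Prop :=
  ∀ x ∈ C, ∀ y ∈ C, ‖T x - T y‖ ^ 2 ≤ K * ‖x - y‖ ^ 2 + κ * ‖(x - T x) - (y - T y)‖ ^ 2

/-- `S : C → C` is asymptotically `κ`-strictly pseudocontractive with the sequence `k`. -/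
structure IsAsymptoticStrictPseudocontractionOn (k : ℕ → ℝ) (κ : ℝ) (S : H → H) (C : Set H) :
    Prop where
  mapsTo : Set.MapsTo S C C
  iterate_of_one_le : ∀ n, 1 ≤ n → IsStrictPseudocontractionOn (k n) κ S^[n] C

namespace IsStrictPseudocontractionOn

theorem norm_relax_sub_sq_le [InnerProductSpace ℝ H] (hT : IsStrictPseudocontractionOn K κ T C)
    {β : ℝ} {y u : H} (hK : 1 ≤ K) (hβ0 : 0 ≤ β) (hβκ : κ ≤ β) (hβ1 : β ≤ 1) (hy : y ∈ C)
    (hu : u ∈ C) (hfix : T u = u) : ‖β • y + (1 - β) • T y - u‖ ^ 2 ≤ K * ‖y - u‖ ^ 2 := by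
  have : 0 ≤ 1 - β := sub_nonneg.2 hβ1
  have hTy : ‖T y - u‖ ^ 2 ≤ K * ‖y - u‖ ^ 2 + β * ‖y - T y‖ ^ 2 := by
    have h := hT y hy u hu
    rw [hfix, sub_self, sub_zero] at h
    exact h.trans (by gcongr)
  calc ‖β • y + (1 - β) • T y - u‖ ^ 2
      = β * ‖y - u‖ ^ 2 + (1 - β) * ‖T y - u‖ ^ 2 - β * (1 - β) * ‖y - T y‖ ^ 2 :=
        norm_smul_add_smul_sub_sq β y (T y) u
    _ ≤ β * (K * ‖y - u‖ ^ 2) + (1 - β) * (K * ‖y - u‖ ^ 2 + β * ‖y - T y‖ ^ 2) -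
          β * (1 - β) * ‖y - T y‖ ^ 2 := by
        gcongr
        exact le_mul_of_one_le_left (sq_nonneg _) hK
    _ = K * ‖y - u‖ ^ 2 := by ring

theorem norm_sub_le (hT : IsStrictPseudocontractionOn K κ T C) (hκ0 : 0 ≤ κ) (hκ1 : κ < 1)
    {x y : H} (hx : x ∈ C) (hy : y ∈ C) :
    ‖T x - T y‖ ≤ (κ + √(K * (1 - κ) + κ)) / (1 - κ) * ‖x - y‖ := by
  set s := ‖T x - T y‖
  set t := ‖x - y‖
  have hκ : 0 < 1 - κ := sub_pos.2 hκ1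
  have hres : ‖(x - T x) - (y - T y)‖ ≤ t + s := by
    rw [sub_sub_sub_comm]
    exact _root_.norm_sub_le _ _
  have hquad : s ^ 2 ≤ K * t ^ 2 + κ * (t + s) ^ 2 := (hT x hx y hy).trans (by gcongr)
  have hsq : ((1 - κ) * s - κ * t) ^ 2 ≤ (K * (1 - κ) + κ) * t ^ 2 := by
    linarith [mul_le_mul_of_nonneg_left hquad hκ.le]
  have hroot : (1 - κ) * s - κ * t ≤ √(K * (1 - κ) + κ) * t := by
    refine (Real.le_sqrt_of_sq_le hsq).trans_eq ?_
    rw [Real.sqrt_mul' _ (sq_nonneg t), Real.sqrt_sq (norm_nonneg _)]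
  rw [div_mul_eq_mul_div, le_div_iff₀' hκ]
  linarith

theorem continuousOn (hT : IsStrictPseudocontractionOn K κ T C) (hκ0 : 0 ≤ κ) (hκ1 : κ < 1) :
    ContinuousOn T C := by
  have : 0 < 1 - κ := sub_pos.2 hκ1
  refine (LipschitzOnWith.of_dist_le_mul (K := ⟨(κ + √(K * (1 - κ) + κ)) / (1 - κ), by positivity⟩)
    fun x hx y hy ↦ ?_).continuousOn
  rw [dist_eq_norm, dist_eq_norm]
  exact hT.norm_sub_le hκ0 hκ1 hx hy

end IsStrictPseudocontractionOn

namespace IsAsymptoticStrictPseudocontractionOn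

theorem iterate (hS : IsAsymptoticStrictPseudocontractionOn k κ S C) (hk : ∀ n, 1 ≤ k n) :
    ∀ n, IsStrictPseudocontractionOn (k n) κ S^[n] C
  | 0 => fun x _ y _ ↦ by simpa using le_mul_of_one_le_left (sq_nonneg ‖x - y‖) (hk 0)
  | n + 1 => hS.iterate_of_one_le (n + 1) (Nat.le_add_left 1 n)

theorem eq_of_tendsto_iterate (hS : IsAsymptoticStrictPseudocontractionOn k κ S C)
    (hκ0 : 0 ≤ κ) (hκ1 : κ < 1) (hk : Tendsto k atTop (𝓝 1)) {y : ℕ → H} {p : H} (hp : p ∈ C)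
    (hyC : ∀ n, y n ∈ C) (hy : Tendsto y atTop (𝓝 p))
    (hSy : Tendsto (fun n ↦ S^[n] (y n)) atTop (𝓝 p)) : S p = p := by
  have hbound : Tendsto (fun n ↦ (κ + √(k n * (1 - κ) + κ)) / (1 - κ) * ‖p - y n‖) atTop (𝓝 0) := by
    simpa using (((((hk.mul_const (1 - κ)).add_const κ).sqrt.const_add κ).div_const (1 - κ)).mul
      (hy.const_sub p).norm)
  have hdiff : Tendsto (fun n ↦ S^[n] p - S^[n] (y n)) atTop (𝓝 0) := by
    refine squeeze_zero_norm' ?_ hbound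
    filter_upwards [eventually_ge_atTop 1] with n hn
    exact (hS.iterate_of_one_le n hn).norm_sub_le hκ0 hκ1 hp (hyC n)
  have horbit : Tendsto (fun n ↦ S^[n] p) atTop (𝓝 p) := by simpa using hdiff.add hSy
  have hcont : ContinuousWithinAt S C p :=
    (hS.iterate_of_one_le 1 le_rfl).continuousOn hκ0 hκ1 p hp
  have himage : Tendsto (fun n ↦ S (S^[n] p)) atTop (𝓝 (S p)) :=
    hcont.tendsto.comp (tendsto_nhdsWithin_iff.2
      ⟨horbit, .of_forall fun n ↦ hS.mapsTo.iterate n hp⟩)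
  refine tendsto_nhds_unique himage ?_
  simpa only [Function.comp_def, Function.iterate_succ_apply'] using
    horbit.comp (tendsto_add_atTop_nat 1)

end IsAsymptoticStrictPseudocontractionOn

end Pseudocontraction

section ParallelHybrid

variable {H : Type*} [NormedAddCommGroup H] [InnerProductSpace ℝ H] {ι J : Type*}

/-- The common solutions in `C` of the equilibrium problems `GEP(f i, A i)` that are fixed by every
`S j`; the paper's `F`. -/
def commonSolutions (C : Set H) (f : ι → H → H → ℝ) (A : ι → H → H) (S : J → H → H) : Set H :=
  {v ∈ C | ∀ i, IsEquilibriumPoint C (f i) (A i v) v} ∩ {v | ∀ j, S j v = v}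

/-- The iterates of Algorithm 1 for arbitrary index types, with the paper's `ȳ_n` and `z̄_n` written
as `y n (iN n)` and `z n (jM n)`, its `α_n` as `a n`, and its `C_n` as `K n`. -/
structure IsParallelHybridIteration (C : Set H) (f : ι → H → H → ℝ) (A : ι → H → H)
    (S : J → H → H) (k a β r : ℕ → ℝ) (ω : ℝ) (x : ℕ → H) (y : ℕ → ι → H) (z : ℕ → J → H)
    (iN : ℕ → ι) (jM : ℕ → J) (K : ℕ → Set H) : Prop where
  y_mem : ∀ n i, y n i ∈ C
  isEquilibriumPoint_y : ∀ n i,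
    IsEquilibriumPoint C (f i) (A i (x n) + (1 / r n) • (y n i - x n)) (y n i)
  norm_y_sub_le : ∀ n i, ‖y n i - x n‖ ≤ ‖y n (iN n) - x n‖
  z_eq : ∀ n j, z n j = a n • x n +
    (1 - a n) • (β n • y n (iN n) + (1 - β n) • (S j)^[n] (y n (iN n)))
  norm_z_sub_le : ∀ n j, ‖z n j - x n‖ ≤ ‖z n (jM n) - x n‖
  shrinking : IsShrinkingProjection C x (fun n ↦ z n (jM n))
    (fun n ↦ (k n - 1) * (‖x n‖ + ω) ^ 2) K

namespace IsParallelHybridIteration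

variable {C : Set H} {f : ι → H → H → ℝ} {A : ι → H → H} {S : J → H → H} {k a β r : ℕ → ℝ}
  {ω α κ e : ℝ} {x : ℕ → H} {y : ℕ → ι → H} {z : ℕ → J → H} {iN : ℕ → ι} {jM : ℕ → J}
  {K : ℕ → Set H}

theorem norm_y_sub_sq_le (h : IsParallelHybridIteration C f A S k a β r ω x y z iN jM K)
    (hf : ∀ i, IsEquilibriumBifunction C (f i)) (hα : 0 < α)
    (hA : ∀ i, IsInverseStronglyMonotoneOn α (A i) C) (hr : ∀ n, 0 < r n ∧ r n ≤ e) {u : H}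
    (hu : u ∈ commonSolutions C f A S) (n : ℕ) (i : ι) :
    ‖y n i - u‖ ^ 2 ≤ ‖x n - u‖ ^ 2 - (1 - e / (2 * α)) * ‖x n - y n i‖ ^ 2 := by
  have hyC := h.y_mem n i
  refine ((h.isEquilibriumPoint_y n i).norm_resolvent_sub_sq_le hα (hr n).1
    ((hf i).add_swap_nonpos _ hyC u hu.1.1) (hA i) (h.shrinking.mem n) hyC hu.1.1
    (hu.1.2 i)).trans ?_
  gcongr
  exact (hr n).2

theorem norm_z_sub_sq_le (h : IsParallelHybridIteration C f A S k a β r ω x y z iN jM K)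
    (hf : ∀ i, IsEquilibriumBifunction C (f i)) (hα : 0 < α)
    (hA : ∀ i, IsInverseStronglyMonotoneOn α (A i) C) (hr : ∀ n, 0 < r n ∧ r n ≤ e)
    (he : e ≤ 2 * α) (hS : ∀ j, IsAsymptoticStrictPseudocontractionOn k κ (S j) C) (hκ : 0 ≤ κ)
    (hk : ∀ n, 1 ≤ k n) (ha : ∀ n, 0 ≤ a n ∧ a n ≤ 1) (hβ : ∀ n, κ ≤ β n ∧ β n ≤ 1) {u : H}
    (hu : u ∈ commonSolutions C f A S) (n : ℕ) (j : J) :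
    ‖z n j - u‖ ^ 2 ≤
      k n * ‖x n - u‖ ^ 2 - (1 - a n) * ((1 - e / (2 * α)) * ‖x n - y n (iN n)‖ ^ 2) := by
  have hc : 0 ≤ 1 - e / (2 * α) := sub_nonneg.2 (div_le_one_of_le₀ he (by positivity))
  rw [h.z_eq]
  refine norm_smul_add_smul_sub_sq_le_of_decrease (ha n).1 (ha n).2 (hk n) (by positivity)
    (h.norm_y_sub_sq_le hf hα hA hr hu n (iN n)) ?_
  exact ((hS j).iterate hk n).norm_relax_sub_sq_le (hk n) (hκ.trans (hβ n).1) (hβ n).1 (hβ n).2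
    (h.y_mem n _) hu.1.1 (Function.iterate_fixed (hu.2 j) n)

theorem commonSolutions_subset (h : IsParallelHybridIteration C f A S k a β r ω x y z iN jM K)
    (hk : ∀ n, 1 ≤ k n) (hω : ∀ u ∈ commonSolutions C f A S, ‖u‖ ≤ ω)
    (hz : ∀ u ∈ commonSolutions C f A S, ∀ n, ‖z n (jM n) - u‖ ^ 2 ≤ k n * ‖x n - u‖ ^ 2)
    (n : ℕ) : commonSolutions C f A S ⊆ K n := by
  refine h.shrinking.subset (fun u hu ↦ hu.1.1) (fun n u hu ↦ ?_) n
  have hdist : ‖x n - u‖ ≤ ‖x n‖ + ω := (norm_sub_le _ _).trans (by gcongr; exact hω u hu)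
  have hk' : 0 ≤ k n - 1 := sub_nonneg.2 (hk n)
  calc ‖z n (jM n) - u‖ ^ 2
      ≤ k n * ‖x n - u‖ ^ 2 := hz u hu n
    _ = ‖x n - u‖ ^ 2 + (k n - 1) * ‖x n - u‖ ^ 2 := by ring
    _ ≤ ‖x n - u‖ ^ 2 + (k n - 1) * (‖x n‖ + ω) ^ 2 := by gcongr

theorem tendsto_zbar (h : IsParallelHybridIteration C f A S k a β r ω x y z iN jM K)
    (hk : Tendsto k atTop (𝓝 1)) {p : H} (hx : Tendsto x atTop (𝓝 p)) :
    Tendsto (fun n ↦ z n (jM n)) atTop (𝓝 p) := by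
  have hε : Tendsto (fun n ↦ (k n - 1) * (‖x n‖ + ω) ^ 2) atTop (𝓝 0) := by
    simpa using (hk.sub_const 1).mul ((hx.norm.add_const ω).pow 2)
  exact h.shrinking.tendsto_anchor hε hx

theorem tendsto_z (h : IsParallelHybridIteration C f A S k a β r ω x y z iN jM K)
    (hk : Tendsto k atTop (𝓝 1)) {p : H} (hx : Tendsto x atTop (𝓝 p)) (j : J) :
    Tendsto (fun n ↦ z n j) atTop (𝓝 p) :=
  tendsto_of_norm_sub_le_norm_sub hx (h.tendsto_zbar hk hx) fun n ↦ h.norm_z_sub_le n j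

theorem tendsto_ybar (h : IsParallelHybridIteration C f A S k a β r ω x y z iN jM K) {q c : ℝ}
    {p u : H} (hq : q < 1) (hc : 0 < c) (hk : Tendsto k atTop (𝓝 1))
    (ha : ∀ᶠ n in atTop, a n ≤ q) (hx : Tendsto x atTop (𝓝 p))
    (hz : ∀ n, ‖z n (jM n) - u‖ ^ 2 ≤
      k n * ‖x n - u‖ ^ 2 - (1 - a n) * (c * ‖x n - y n (iN n)‖ ^ 2)) :
    Tendsto (fun n ↦ y n (iN n)) atTop (𝓝 p) := by
  refine tendsto_of_norm_sq_add_le (u := u) (mul_pos (sub_pos.2 hq) hc) hx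
    (h.tendsto_zbar hk hx) hk (ha.mono fun n hn ↦ ?_)
  have hcoeff : (1 - q) * (c * ‖x n - y n (iN n)‖ ^ 2) ≤
      (1 - a n) * (c * ‖x n - y n (iN n)‖ ^ 2) := by gcongr
  linarith [hz n]

theorem tendsto_iterate (h : IsParallelHybridIteration C f A S k a β r ω x y z iN jM K)
    {q b : ℝ} {p : H} (hq : q < 1) (hb : b < 1) (ha : ∀ᶠ n in atTop, a n ≤ q) (hβ : ∀ n, β n ≤ b)
    (hx : Tendsto x atTop (𝓝 p)) (hy : Tendsto (fun n ↦ y n (iN n)) atTop (𝓝 p)) {j : J}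
    (hz : Tendsto (fun n ↦ z n j) atTop (𝓝 p)) :
    Tendsto (fun n ↦ (S j)^[n] (y n (iN n))) atTop (𝓝 p) := by
  simp only [h.z_eq] at hz
  exact tendsto_of_tendsto_smul_add_smul hb (.of_forall hβ) hy
    (tendsto_of_tendsto_smul_add_smul hq ha hx hz)

end IsParallelHybridIteration

theorem algorithm1_strong_convergence_general {C : Set H} (hC : IsComplete C) (hconv : Convex ℝ C)
    {f : ι → H → H → ℝ} (hf : ∀ i, IsEquilibriumBifunction C (f i))
    {A : ι → H → H} {α : ℝ} (hA : ∀ i, IsInverseStronglyMonotoneOn α (A i) C)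
    {S : J → H → H} {κ : ℝ} {k : ℕ → ℝ}
    (hS : ∀ j, IsAsymptoticStrictPseudocontractionOn k κ (S j) C) (hκ : 0 ≤ κ)
    (hk : ∀ n, 1 ≤ k n) (hklim : Tendsto k atTop (𝓝 1))
    (hne : (commonSolutions C f A S).Nonempty) {ω : ℝ}
    (hω : ∀ u ∈ commonSolutions C f A S, ‖u‖ ≤ ω)
    {a β r : ℕ → ℝ} {b d e : ℝ} (ha : ∀ n, 0 ≤ a n ∧ a n ≤ 1) (halim : limsup a atTop < 1)
    (hb : b < 1) (hβ : ∀ n, κ ≤ β n ∧ β n ≤ b)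
    (hd : 0 < d) (he : e < 2 * α) (hr : ∀ n, d ≤ r n ∧ r n ≤ e)
    {x : ℕ → H} {y : ℕ → ι → H} {z : ℕ → J → H} {iN : ℕ → ι} {jM : ℕ → J} {K : ℕ → Set H}
    (h : IsParallelHybridIteration C f A S k a β r ω x y z iN jM K) :
    ∃ p, IsProjOn (commonSolutions C f A S) (x 0) p ∧ Tendsto x atTop (𝓝 p) ∧
      (∀ i, Tendsto (fun n ↦ y n i) atTop (𝓝 p)) ∧
      (∀ j, Tendsto (fun n ↦ z n j) atTop (𝓝 p)) := by
  have hα : 0 < α := by linarith [hr 0]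
  have hκ1 : κ < 1 := ((hβ 0).1.trans (hβ 0).2).trans_lt hb
  have hc : 0 < 1 - e / (2 * α) := sub_pos.2 ((div_lt_one (by positivity)).2 he)
  obtain ⟨q, hlq, hq⟩ := exists_between halim
  have haq : ∀ᶠ n in atTop, a n ≤ q :=
    (eventually_lt_of_limsup_lt hlq (isBoundedUnder_of ⟨1, fun n ↦ (ha n).2⟩)).mono fun _ ↦ le_of_lt
  have hest := fun u hu n ↦ h.norm_z_sub_sq_le (u := u) hf hα hA
    (fun n ↦ ⟨hd.trans_le (hr n).1, (hr n).2⟩) he.le hS hκ hk ha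
    (fun n ↦ ⟨(hβ n).1, (hβ n).2.trans hb.le⟩) hu n (jM n)
  have hFK := h.commonSolutions_subset hk hω fun u hu n ↦ (hest u hu n).trans
    (sub_le_self _ (mul_nonneg (sub_nonneg.2 (ha n).2) (by positivity)))
  obtain ⟨u, hu⟩ := hne
  obtain ⟨p, hpC, hx⟩ := h.shrinking.exists_tendsto hC hconv fun n ↦ hFK n hu
  have hz := h.tendsto_z hklim hx
  have hybar := h.tendsto_ybar hq hc hklim haq hx (hest u hu)
  have hy := fun i ↦ tendsto_of_norm_sub_le_norm_sub hx hybar fun n ↦ h.norm_y_sub_le n i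
  have hfix : ∀ j, S j p = p := fun j ↦ (hS j).eq_of_tendsto_iterate hκ hκ1 hklim hpC
    (fun n ↦ h.y_mem n _) hybar (h.tendsto_iterate hq hb haq (fun n ↦ (hβ n).2) hx hybar (hz j))
  have hequil : ∀ i, IsEquilibriumPoint C (f i) (A i p) p := fun i ↦
    (hf i).isEquilibriumPoint_of_tendsto_resolvent hconv ((hA i).continuousOn hα) hd
      (fun n ↦ (hr n).1) hpC h.shrinking.mem (fun n ↦ h.y_mem n i) hx (hy i)
      fun n ↦ h.isEquilibriumPoint_y n i
  exact ⟨p, .of_tendsto hx ⟨⟨hpC, hequil⟩, hfix⟩ hFK h.shrinking.isProjOn, hx, hy, hz⟩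

end ParallelHybrid

/-- **Theorem 3.1.** Strong convergence of the parallel hybrid Algorithm 1
for generalized equilibrium problems and asymptotically strictly pseudocontractive
mappings: the sequences `x_n`, `y_n^i`, `z_n^j` all converge strongly to `P_F x_0`. -/
theorem algorithm1_strong_convergence
    {H : Type*} [NormedAddCommGroup H] [InnerProductSpace ℝ H] [CompleteSpace H]
    (C : Set H) (hCne : C.Nonempty) (hCcl : IsClosed C) (hCcv : Convex ℝ C)
    (N M : ℕ) (hN : 0 < N) (hM : 0 < M)
    -- the bifunctions fᵢ satisfy (A1)-(A4)
    (f : Fin N → H → H → ℝ)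
    (hfA1 : ∀ i, ∀ x ∈ C, f i x x = 0)
    (hfA2 : ∀ i, ∀ x ∈ C, ∀ y ∈ C, f i x y + f i y x ≤ 0)
    (hfA3 : ∀ i, ∀ x ∈ C, ∀ y ∈ C, ∀ z ∈ C,
      Filter.limsup (fun t : ℝ => f i (t • z + (1 - t) • x) y) (nhdsWithin 0 (Set.Ioi 0))
        ≤ f i x y)
    (hfA4conv : ∀ i, ∀ x ∈ C, ConvexOn ℝ C (f i x))
    (hfA4lsc : ∀ i, ∀ x ∈ C, LowerSemicontinuousOn (f i x) C)
    -- the operators Aᵢ are α-inverse strongly monotone on C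
    (A : Fin N → H → H) (α : ℝ) (hα : 0 < α)
    (hism : ∀ i, ∀ x ∈ C, ∀ y ∈ C, α * ‖A i x - A i y‖ ^ 2 ≤ ⟪A i x - A i y, x - y⟫)
    -- the mappings Sⱼ : C → C are asymptotically κ-strictly pseudocontractive with
    -- the same sequence {kₙ} ⊆ [1,∞), kₙ → 1
    (S : Fin M → H → H) (hS : ∀ j, Set.MapsTo (S j) C C)
    (κ : ℝ) (hκ0 : 0 ≤ κ) (hκ1 : κ < 1)
    (k : ℕ → ℝ) (hk1 : ∀ n, 1 ≤ k n)
    (hklim : Filter.Tendsto k Filter.atTop (nhds 1))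
    (hasym : ∀ j, ∀ n, 1 ≤ n → ∀ x ∈ C, ∀ y ∈ C,
      ‖(S j)^[n] x - (S j)^[n] y‖ ^ 2
        ≤ k n * ‖x - y‖ ^ 2 + κ * ‖(x - (S j)^[n] x) - (y - (S j)^[n] y)‖ ^ 2)
    -- the solution set F is nonempty and bounded by ω
    (F : Set H)
    (hF : F = {v ∈ C | ∀ i, ∀ y ∈ C, 0 ≤ f i v y + ⟪A i v, y - v⟫} ∩
      {v | ∀ j, S j v = v})
    (hFne : F.Nonempty) (ω : ℝ) (hω : 0 < ω) (hFb : ∀ v ∈ F, ‖v‖ ≤ ω)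
    -- control parameters
    (a : ℕ → ℝ) (ha0 : ∀ n, 0 < a n) (ha1 : ∀ n, a n < 1)
    (halimsup : Filter.limsup a Filter.atTop < 1)
    (β : ℕ → ℝ) (b : ℝ) (hbκ : κ < b) (hb1 : b < 1) (hβ : ∀ n, κ ≤ β n ∧ β n ≤ b)
    (r : ℕ → ℝ) (d e : ℝ) (hd : 0 < d) (he : e < 2 * α) (hr : ∀ n, d ≤ r n ∧ r n ≤ e)
    -- the iterates of Algorithm 1
    (x : ℕ → H) (y : ℕ → Fin N → H) (z : ℕ → Fin M → H)
    (iN : ℕ → Fin N) (jM : ℕ → Fin M) (ybar zbar : ℕ → H) (Cset : ℕ → Set H)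
    (hx0 : x 0 ∈ C) (hC0 : Cset 0 = C)
    -- (i) yₙⁱ solves the regularized generalized equilibrium problem
    (hy : ∀ n i, y n i ∈ C ∧ ∀ w ∈ C,
      0 ≤ f i (y n i) w + ⟪A i (x n), w - y n i⟫ +
        (1 / r n) * ⟪w - y n i, y n i - x n⟫)
    -- (ii) iₙ maximizes ‖yₙⁱ - xₙ‖ and ȳₙ = yₙ^{iₙ}
    (hiN : ∀ n i, ‖y n i - x n‖ ≤ ‖y n (iN n) - x n‖)
    (hybar : ∀ n, ybar n = y n (iN n))
    -- (iii) zₙʲ = αₙ xₙ + (1-αₙ)(βₙ ȳₙ + (1-βₙ) Sⱼⁿ ȳₙ)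
    (hz : ∀ n j, z n j = a n • x n +
      (1 - a n) • (β n • ybar n + (1 - β n) • (S j)^[n] (ybar n)))
    -- (iv) jₙ maximizes ‖zₙʲ - xₙ‖ and z̄ₙ = zₙ^{jₙ}
    (hjM : ∀ n j, ‖z n j - x n‖ ≤ ‖z n (jM n) - x n‖)
    (hzbar : ∀ n, zbar n = z n (jM n))
    -- (v) Cₙ₊₁ = {v ∈ Cₙ : ‖z̄ₙ - v‖² ≤ ‖xₙ - v‖² + εₙ}, εₙ = (kₙ - 1)(‖xₙ‖ + ω)²
    (hCset : ∀ n, Cset (n + 1) =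
      {v ∈ Cset n | ‖zbar n - v‖ ^ 2 ≤ ‖x n - v‖ ^ 2 + (k n - 1) * (‖x n‖ + ω) ^ 2})
    -- (vi) xₙ₊₁ = P_{Cₙ₊₁} x₀
    (hxproj : ∀ n, IsProjOn (Cset (n + 1)) (x 0) (x (n + 1))) :
    ∃ p, IsProjOn F (x 0) p ∧
      Filter.Tendsto x Filter.atTop (nhds p) ∧
      (∀ i, Filter.Tendsto (fun n => y n i) Filter.atTop (nhds p)) ∧
      (∀ j, Filter.Tendsto (fun n => z n j) Filter.atTop (nhds p)) := by
  obtain rfl : ybar = fun n ↦ y n (iN n) := funext hybar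
  obtain rfl : zbar = fun n ↦ z n (jM n) := funext hzbar
  subst hF
  exact algorithm1_strong_convergence_general hCcl.isComplete hCcv
    (fun i ↦ ⟨hfA1 i, hfA2 i, hfA3 i, hfA4conv i, hfA4lsc i⟩) hism (fun j ↦ ⟨hS j, hasym j⟩) hκ0
    hk1 hklim hFne hFb (fun n ↦ ⟨(ha0 n).le, (ha1 n).le⟩) halimsup hb1 hβ hd he hr
    ⟨fun n i ↦ (hy n i).1, fun n i ↦ isEquilibriumPoint_add_smul_iff.2 (hy n i).2, hiN, hz, hjM,
      hx0, hC0, hCset, hxproj⟩
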